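/- arXiv:2003.10081 — 3 statements merged into one kernel-verified Lean document; each statement's English description precedes it below -/
import Mathlib

section
/- (Entropy conservation of the semi-discrete scheme.) Let Δx > 0, let b_i be fixed bottom values, and let the primitive grid states (h_i(t), vx_i(t), vy_i(t), Bx_i(t), By_i(t)) be differentiable functions of time with h_i(t) > 0, whose conservative variables U_i = (h_i, h_i vx_i, h_i vy_i, h_i Bx_i, h_i By_i) satisfy the semi-discrete scheme dU_i/dt = −(F(U_i,U_{i+1}) − F(U_{i−1},U_i))/Δx − Ψ_iᵀ(⟨hBx⟩_{i+1/2} − ⟨hBx⟩_{i−1/2})/Δx − (G₁)_iᵀ(⟨b⟩_{i+1/2} − ⟨b⟩_{i−1/2})/Δx, where Ψ_i = (0,0,0,vx_i,vy_i), (G₁)_i = (0, g h_i, 0, 0, 0), and F is a two-point flux satisfying the entropy conservation condition for every pair of states. Then the discrete entropy identity d/dt η(U_i(t)) + (q̃(U_i,U_{i+1}) − q̃(U_{i−1},U_i))/Δx = 0 holds, where η := ½h(vx²+vy²+Bx²+By²) + ½gh² + ghb. -/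
/-!
At an interface, attach to a state `W` the one-sided entropy flux `V(W) · F` plus the interface
means weighted by `W`, minus the potentials of `W`. Then `q̃` is the mean of its values at the two
adjacent states, and entropy conservation says exactly that these two values agree, so `q̃` equals
either one. When both interface fluxes of a cell are evaluated at the state of that cell, the
potentials cancel in the difference, and what remains is `-Δx` times `V` paired with the right-hand
side of the scheme, because `V · Ψ = Φ` and `V · G₁ = g h vx`. Finally `V = ∂η/∂U` turns this
pairing into the time derivative of `η`.
-/

open scoped BigOperators
noncomputable section
open Matrix

/-- A state of the 1D (x-split) shallow water MHD system together with
the bottom topography value `b`. -/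
structure SWState where
  h : ℝ
  vx : ℝ
  vy : ℝ
  Bx : ℝ
  By : ℝ
  b : ℝ

namespace SWMHD

/-- Mean `⟨a⟩ = (a_L + a_R)/2` of an expression in the state variables. -/
def amean (f : SWState → ℝ) (L R : SWState) : ℝ := (f L + f R) / 2

/-- Jump `[a] = a_R − a_L` of an expression in the state variables. -/
def ajump (f : SWState → ℝ) (L R : SWState) : ℝ := f R - f L

/-- Entropy variables `V`. -/
def entropyVars (g : ℝ) (U : SWState) : Fin 5 → ℝ :=
  ![g * (U.h + U.b) - (U.vx ^ 2 + U.vy ^ 2 + U.Bx ^ 2 + U.By ^ 2) / 2,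
    U.vx, U.vy, U.Bx, U.By]

/-- Jump of the entropy variables. -/
def vjump (g : ℝ) (L R : SWState) : Fin 5 → ℝ :=
  fun k => entropyVars g R k - entropyVars g L k

/-- Entropy potential `ψ₁ = ½ g h² vx`. -/
def psi1 (g : ℝ) (U : SWState) : ℝ := g * U.h ^ 2 * U.vx / 2

/-- `Φ = vx Bx + vy By`. -/
def Phi (U : SWState) : ℝ := U.vx * U.Bx + U.vy * U.By

/-- The physical flux `F₁` of the x-split system. -/
def physFlux (g : ℝ) (U : SWState) : Fin 5 → ℝ :=
  ![U.h * U.vx,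
    U.h * U.vx ^ 2 - U.h * U.Bx ^ 2 + g * U.h ^ 2 / 2,
    U.h * U.vx * U.vy - U.h * U.Bx * U.By,
    0,
    U.h * (U.vx * U.By - U.Bx * U.vy)]

/-- The physical entropy flux `q₁`. -/
def q1 (g : ℝ) (U : SWState) : ℝ :=
  ((U.vx ^ 2 + U.vy ^ 2 + U.Bx ^ 2 + U.By ^ 2) / 2 + g * U.h + g * U.b) * U.h * U.vx
    - U.h * U.Bx * (U.vx * U.Bx + U.vy * U.By)

/-- The entropy conservative (EC) two-point flux `F̃₁(L,R)`. -/
def ecFlux (g : ℝ) (L R : SWState) : Fin 5 → ℝ :=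
  ![amean (fun U => U.h) L R * amean (fun U => U.vx) L R,
    amean (fun U => U.h) L R * (amean (fun U => U.vx) L R) ^ 2
      + g / 2 * amean (fun U => U.h ^ 2) L R
      - amean (fun U => U.h * U.Bx) L R * amean (fun U => U.Bx) L R
      + g * (amean (fun U => U.h * U.b) L R
             - amean (fun U => U.h) L R * amean (fun U => U.b) L R),
    amean (fun U => U.h) L R * amean (fun U => U.vx) L R * amean (fun U => U.vy) L R
      - amean (fun U => U.h * U.Bx) L R * amean (fun U => U.By) L R,
    amean (fun U => U.h) L R * amean (fun U => U.vx) L R * amean (fun U => U.Bx) L R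
      - amean (fun U => U.h * U.Bx) L R * amean (fun U => U.vx) L R,
    amean (fun U => U.h) L R * amean (fun U => U.vx) L R * amean (fun U => U.By) L R
      - amean (fun U => U.h * U.Bx) L R * amean (fun U => U.vy) L R]

/-- The entropy conservation condition `[V]·F = [ψ₁] − [Φ]⟨hBx⟩ + g[h b vx] − g[h vx]⟨b⟩`
for a two-point numerical flux `F`. -/
def ecCondition (g : ℝ) (F : Fin 5 → ℝ) (L R : SWState) : Prop :=
  vjump g L R ⬝ᵥ F
    = ajump (psi1 g) L R
      - ajump Phi L R * amean (fun U => U.h * U.Bx) L R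
      + g * ajump (fun U => U.h * U.b * U.vx) L R
      - g * ajump (fun U => U.h * U.vx) L R * amean (fun U => U.b) L R

/-- The numerical entropy flux `q̃` built from a two-point flux value `F`. -/
def numEntropyFlux (g : ℝ) (F : Fin 5 → ℝ) (L R : SWState) : ℝ :=
  (fun k => (entropyVars g L k + entropyVars g R k) / 2) ⬝ᵥ F
    + amean Phi L R * amean (fun U => U.h * U.Bx) L R
    - amean (psi1 g) L R
    + g * amean (fun U => U.h * U.vx) L R * amean (fun U => U.b) L R
    - g * amean (fun U => U.h * U.b * U.vx) L R

/-- Conservative variables `U = (h, h vx, h vy, h Bx, h By)`. -/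
def consVar (U : SWState) : Fin 5 → ℝ :=
  ![U.h, U.h * U.vx, U.h * U.vy, U.h * U.Bx, U.h * U.By]

/-- The source vector `Ψ = (0,0,0,vx,vy)`. -/
def PsiVec (U : SWState) : Fin 5 → ℝ := ![0, 0, 0, U.vx, U.vy]

/-- The bottom-topography source vector `G₁ = (0, g h, 0, 0, 0)`. -/
def G1Vec (g : ℝ) (U : SWState) : Fin 5 → ℝ := ![0, g * U.h, 0, 0, 0]

/-- The mathematical entropy (total energy). -/
def entropyFn (g : ℝ) (U : SWState) : ℝ :=
  U.h * (U.vx ^ 2 + U.vy ^ 2 + U.Bx ^ 2 + U.By ^ 2) / 2 + g * U.h ^ 2 / 2 + g * U.h * U.b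

end SWMHD

open SWMHD

open Filter Topology in
theorem hasDerivAt_mul_sq_of_continuousAt {𝕜 : Type*} [NontriviallyNormedField 𝕜] {h v : 𝕜 → 𝕜}
    {h' m' t : 𝕜} (hh : HasDerivAt h h' t) (hm : HasDerivAt (fun s => h s * v s) m' t)
    (hv : ContinuousAt v t) :
    HasDerivAt (fun s => h s * v s ^ 2) (2 * v t * m' - v t ^ 2 * h') t := by
  have hv' : Tendsto v (𝓝[≠] t) (𝓝 (v t)) := hv.tendsto.mono_left nhdsWithin_le_nhds
  have slope_eq (s : 𝕜) : slope (fun s => h s * v s ^ 2) t s =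
      slope (fun s => h s * v s) t s * (v s + v t) - v s * v t * slope h t s := by
    simp only [slope_def_field]
    ring
  rw [hasDerivAt_iff_tendsto_slope] at hh hm ⊢
  simp only [funext slope_eq]
  convert (hm.mul (hv'.add_const (v t))).sub ((hv'.mul_const (v t)).mul hh) using 2
  ring

namespace SWMHD

/-- The entropy flux through the interface between `L` and `R` as seen from a state `W`: the
formula for `q̃(L, R)` with values at `W` in place of all means over `L` and `R` except `⟨hBx⟩` and
`⟨b⟩`, so that entropy conservation becomes independence of the side from which one looks. -/
def oneSidedEntropyFlux (g : ℝ) (F : Fin 5 → ℝ) (L R W : SWState) : ℝ :=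
  entropyVars g W ⬝ᵥ F
    + Phi W * amean (fun U => U.h * U.Bx) L R
    - psi1 g W
    + g * (W.h * W.vx) * amean (fun U => U.b) L R
    - g * (W.h * W.b * W.vx)

/-- The right-hand side `dU/dt` of the semi-discrete scheme in a cell with state `U`, neighbours `L`
and `R`, and flux values `Fl` and `Fr` at its left and right interfaces. -/
def schemeRhs (g Δx : ℝ) (Fl Fr : Fin 5 → ℝ) (L U R : SWState) : Fin 5 → ℝ := fun k =>
  -(Fr k - Fl k) / Δx
    - PsiVec U k * (amean (fun W => W.h * W.Bx) U R - amean (fun W => W.h * W.Bx) L U) / Δx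
    - G1Vec g U k * (amean (fun W => W.b) U R - amean (fun W => W.b) L U) / Δx

variable {g Δx t : ℝ} {F Fl Fr U' : Fin 5 → ℝ} {L R : SWState}

theorem numEntropyFlux_eq_amean_oneSidedEntropyFlux (g : ℝ) (F : Fin 5 → ℝ) (L R : SWState) :
    numEntropyFlux g F L R = amean (oneSidedEntropyFlux g F L R) L R := by
  have mean_dotProduct : (fun k => (entropyVars g L k + entropyVars g R k) / 2) ⬝ᵥ F =
      (entropyVars g L ⬝ᵥ F + entropyVars g R ⬝ᵥ F) / 2 := by
    simp only [dotProduct, ← Finset.sum_add_distrib, Finset.sum_div]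
    exact Finset.sum_congr rfl fun k _ => by ring
  rw [numEntropyFlux, mean_dotProduct]
  simp only [oneSidedEntropyFlux, amean]
  ring

theorem ecCondition_iff_oneSidedEntropyFlux_eq :
    ecCondition g F L R ↔
      oneSidedEntropyFlux g F L R L = oneSidedEntropyFlux g F L R R := by
  have jump_dotProduct : vjump g L R ⬝ᵥ F = entropyVars g R ⬝ᵥ F - entropyVars g L ⬝ᵥ F :=
    sub_dotProduct _ _ _
  rw [ecCondition, jump_dotProduct]
  simp only [oneSidedEntropyFlux, ajump]
  constructor <;> intro h <;> linear_combination -h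

theorem numEntropyFlux_eq_left (hF : ecCondition g F L R) :
    numEntropyFlux g F L R = oneSidedEntropyFlux g F L R L := by
  rw [numEntropyFlux_eq_amean_oneSidedEntropyFlux, amean,
    ← ecCondition_iff_oneSidedEntropyFlux_eq.1 hF, add_self_div_two]

theorem numEntropyFlux_eq_right (hF : ecCondition g F L R) :
    numEntropyFlux g F L R = oneSidedEntropyFlux g F L R R :=
  (numEntropyFlux_eq_left hF).trans (ecCondition_iff_oneSidedEntropyFlux_eq.1 hF)

theorem entropyVars_dotProduct_PsiVec (g : ℝ) (U : SWState) :
    entropyVars g U ⬝ᵥ PsiVec U = Phi U := by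
  simp only [entropyVars, PsiVec, Phi, dotProduct, Fin.sum_univ_five, Matrix.cons_val]
  ring

theorem entropyVars_dotProduct_G1Vec (g : ℝ) (U : SWState) :
    entropyVars g U ⬝ᵥ G1Vec g U = g * (U.h * U.vx) := by
  simp only [entropyVars, G1Vec, dotProduct, Fin.sum_univ_five, Matrix.cons_val]
  ring

theorem smul_schemeRhs (hΔx : Δx ≠ 0) (g : ℝ) (Fl Fr : Fin 5 → ℝ) (L U R : SWState) :
    Δx • schemeRhs g Δx Fl Fr L U R =
      -(Fr - Fl
        + (amean (fun W => W.h * W.Bx) U R - amean (fun W => W.h * W.Bx) L U) • PsiVec U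
        + (amean (fun W => W.b) U R - amean (fun W => W.b) L U) • G1Vec g U) := by
  ext k
  simp only [schemeRhs, Pi.smul_apply, Pi.neg_apply, Pi.add_apply, Pi.sub_apply, smul_eq_mul]
  field_simp
  ring

theorem entropyVars_dotProduct_schemeRhs {U : SWState} (hΔx : Δx ≠ 0)
    (hFl : ecCondition g Fl L U) (hFr : ecCondition g Fr U R) :
    entropyVars g U ⬝ᵥ schemeRhs g Δx Fl Fr L U R =
      -(numEntropyFlux g Fr U R - numEntropyFlux g Fl L U) / Δx := by
  rw [eq_div_iff hΔx, mul_comm, ← smul_eq_mul, ← dotProduct_smul, smul_schemeRhs hΔx,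
    numEntropyFlux_eq_left hFr, numEntropyFlux_eq_right hFl]
  simp only [dotProduct_neg, dotProduct_add, dotProduct_sub, dotProduct_smul, smul_eq_mul,
    entropyVars_dotProduct_PsiVec, entropyVars_dotProduct_G1Vec, oneSidedEntropyFlux]
  ring

theorem hasDerivAt_entropyFn {U : ℝ → SWState}
    (hU : HasDerivAt (fun s => consVar (U s)) U' t)
    (hb : HasDerivAt (fun s => (U s).b) 0 t)
    (hvx : ContinuousAt (fun s => (U s).vx) t) (hvy : ContinuousAt (fun s => (U s).vy) t)
    (hBx : ContinuousAt (fun s => (U s).Bx) t) (hBy : ContinuousAt (fun s => (U s).By) t) :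
    HasDerivAt (fun s => entropyFn g (U s)) (entropyVars g (U t) ⬝ᵥ U') t := by
  have hcomp := hasDerivAt_pi.1 hU
  have hh : HasDerivAt (fun s => (U s).h) (U' 0) t := hcomp 0
  have hkin := (hasDerivAt_mul_sq_of_continuousAt hh (hcomp 1) hvx).fun_add
    (hasDerivAt_mul_sq_of_continuousAt hh (hcomp 2) hvy)
  have hmag := (hasDerivAt_mul_sq_of_continuousAt hh (hcomp 3) hBx).fun_add
    (hasDerivAt_mul_sq_of_continuousAt hh (hcomp 4) hBy)
  have hpot := (((hh.fun_pow 2).div_const 2).fun_add (hh.fun_mul hb)).const_mul g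
  have entropyFn_eq : (fun s => entropyFn g (U s)) = fun s =>
      ((U s).h * (U s).vx ^ 2 + (U s).h * (U s).vy ^ 2
        + ((U s).h * (U s).Bx ^ 2 + (U s).h * (U s).By ^ 2)) / 2
      + g * ((U s).h ^ 2 / 2 + (U s).h * (U s).b) := by
    funext s
    rw [entropyFn]
    ring
  rw [entropyFn_eq]
  refine (((hkin.fun_add hmag).div_const 2).fun_add hpot).congr_deriv ?_
  simp only [entropyVars, dotProduct, Fin.sum_univ_five, Matrix.cons_val]
  push_cast
  ring

end SWMHD

theorem semidiscrete_entropy_identity_general {g Δx t : ℝ} (hΔx : Δx ≠ 0)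
    {Fl Fr : Fin 5 → ℝ} {L R : SWState} {U : ℝ → SWState}
    (hb : HasDerivAt (fun s => (U s).b) 0 t)
    (hvx : ContinuousAt (fun s => (U s).vx) t) (hvy : ContinuousAt (fun s => (U s).vy) t)
    (hBx : ContinuousAt (fun s => (U s).Bx) t) (hBy : ContinuousAt (fun s => (U s).By) t)
    (hFl : ecCondition g Fl L (U t)) (hFr : ecCondition g Fr (U t) R)
    (scheme : HasDerivAt (fun s => consVar (U s)) (schemeRhs g Δx Fl Fr L (U t) R) t) :
    HasDerivAt (fun s => entropyFn g (U s))
      (-(numEntropyFlux g Fr (U t) R - numEntropyFlux g Fl L (U t)) / Δx) t := by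
  rw [← entropyVars_dotProduct_schemeRhs hΔx hFl hFr]
  exact hasDerivAt_entropyFn scheme hb hvx hvy hBx hBy

/-- entropy conservation of the semi-discrete scheme.  If the
conservative variables of differentiable positive-height primitive grid states
satisfy the semi-discrete EC scheme built from a two-point flux satisfying the
entropy conservation condition, then the discrete entropy identity
`d/dt η(U_i) + (q̃_{i+1/2} − q̃_{i−1/2})/Δx = 0` holds. -/
theorem semidiscrete_entropy_identity
    (g Δx : ℝ) (hΔx : 0 < Δx)
    (h vx vy Bx By : ℤ → ℝ → ℝ) (b : ℤ → ℝ)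
    (hdiff : ∀ i t, DifferentiableAt ℝ (h i) t ∧ DifferentiableAt ℝ (vx i) t ∧
      DifferentiableAt ℝ (vy i) t ∧ DifferentiableAt ℝ (Bx i) t ∧ DifferentiableAt ℝ (By i) t)
    (hpos : ∀ i t, 0 < h i t)
    (F : SWState → SWState → (Fin 5 → ℝ))
    (hEC : ∀ L R, ecCondition g (F L R) L R)
    (st : ℤ → ℝ → SWState)
    (hst : ∀ i t, st i t = ⟨h i t, vx i t, vy i t, Bx i t, By i t, b i⟩)
    (i : ℤ)
    (scheme : ∀ (k : Fin 5) (t : ℝ),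
      HasDerivAt (fun s => consVar (st i s) k)
        (-(F (st i t) (st (i+1) t) k - F (st (i-1) t) (st i t) k) / Δx
          - PsiVec (st i t) k *
              (amean (fun U => U.h * U.Bx) (st i t) (st (i+1) t)
                - amean (fun U => U.h * U.Bx) (st (i-1) t) (st i t)) / Δx
          - G1Vec g (st i t) k *
              (amean (fun U => U.b) (st i t) (st (i+1) t)
                - amean (fun U => U.b) (st (i-1) t) (st i t)) / Δx) t) :
    ∀ t : ℝ, HasDerivAt (fun s => entropyFn g (st i s))
      (-(numEntropyFlux g (F (st i t) (st (i+1) t)) (st i t) (st (i+1) t)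
          - numEntropyFlux g (F (st (i-1) t) (st i t)) (st (i-1) t) (st i t)) / Δx) t := by
  intro t
  obtain ⟨-, hvx, hvy, hBx, hBy⟩ := hdiff i t
  refine semidiscrete_entropy_identity_general hΔx.ne' ?_ ?_ ?_ ?_ ?_ (hEC _ _) (hEC _ _)
    (hasDerivAt_pi.2 fun k => scheme k t) <;> simp only [hst]
  exacts [hasDerivAt_const t (b i), hvx.continuousAt, hvy.continuousAt, hBx.continuousAt,
    hBy.continuousAt]
end
end

section
/- (Moving-equilibrium preservation of the second-order EC scheme.) Let g, C₁, C₂ be real numbers and let three consecutive grid states U_{i−1}, U_i, U_{i+1} with bottom values b_{i−1}, b_i, b_{i+1} have zero magnetic field (Bx_j = By_j = 0 for all j) and satisfy the 1D moving equilibrium conditions ⟨h⟩_{j+1/2}·⟨vx⟩_{j+1/2} = C₁ at both interfaces j+1/2 = i−1/2, i+1/2 and vx_j²/2 + g(h_j + b_j) = C₂ at all three grid points. Then the first and second components (the h- and h·vx-components) of the right-hand side of the semi-discrete EC scheme at grid point i vanish: the mass flux difference F̃₁(U_i,U_{i+1})⁽¹⁾ − F̃₁(U_{i−1},U_i)⁽¹⁾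 = 0 and F̃₁(U_i,U_{i+1})⁽²⁾ − F̃₁(U_{i−1},U_i)⁽²⁾ + g·h_i·(⟨b⟩_{i+1/2} − ⟨b⟩_{i−1/2}) = 0. -/
open scoped BigOperators
noncomputable section
open Matrix

open SWMHD

/-! Write every mean as `⟨a⟩ = a_U + [a]/2`, with `U` the central state of the stencil. The discrete
product rules then show that the momentum flux plus the topography source at an interface equals the
mass flux times `vx_U`, plus `⟨h⟩/2` times the jump of the Bernoulli head, minus a magnetic term,
plus a summand depending on `U` alone. That summand cancels between the two interfaces, and at
a moving equilibrium the remaining differences and jumps all vanish. -/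

namespace SWMHD

/-- The Bernoulli head `vx² / 2 + g (h + b)`, the energy-like invariant of a one-dimensional
moving equilibrium. -/
def bernoulliHead (g : ℝ) (U : SWState) : ℝ := U.vx ^ 2 / 2 + g * (U.h + U.b)

/-- The magnetic tension `⟨h Bx⟩⟨Bx⟩` at an interface: the magnetic part of the momentum component
of the EC flux, taken with the positive sign. -/
def magneticTension (L R : SWState) : ℝ :=
  amean (fun U => U.h * U.Bx) L R * amean (fun U => U.Bx) L R

section MeanAndJump

variable (f k : SWState → ℝ) (L R : SWState)

theorem amean_comm : amean f L R = amean f R L := by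
  unfold amean
  ring

theorem amean_eq_left_add_half_ajump : amean f L R = f L + ajump f L R / 2 := by
  unfold amean ajump
  ring

theorem amean_mul :
    amean (fun U => f U * k U) L R
      = amean f L R * amean k L R + ajump f L R * ajump k L R / 4 := by
  unfold amean ajump
  ring

theorem ajump_sq : ajump (fun U => f U ^ 2) L R = 2 * amean f L R * ajump f L R := by
  unfold amean ajump
  ring

end MeanAndJump

theorem ajump_bernoulliHead (g : ℝ) (L R : SWState) :
    ajump (bernoulliHead g) L R
      = amean SWState.vx L R * ajump SWState.vx L R
        + g * (ajump SWState.h L R + ajump SWState.b L R) := by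
  unfold amean ajump bernoulliHead
  ring

theorem ecFlux_comm (g : ℝ) (L R : SWState) : ecFlux g L R = ecFlux g R L := by
  simp only [ecFlux, amean_comm _ L R]

theorem magneticTension_comm (L R : SWState) : magneticTension L R = magneticTension R L := by
  simp only [magneticTension, amean_comm _ L R]

theorem magneticTension_eq_zero {L R : SWState} (hL : L.Bx = 0) (hR : R.Bx = 0) :
    magneticTension L R = 0 := by
  simp [magneticTension, amean, hL, hR]

theorem ecFlux_zero (g : ℝ) (L R : SWState) :
    ecFlux g L R 0 = amean SWState.h L R * amean SWState.vx L R := rfl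

theorem ecFlux_one (g : ℝ) (L R : SWState) :
    ecFlux g L R 1
      = amean SWState.h L R * amean SWState.vx L R ^ 2
        + g / 2 * amean (fun U => U.h ^ 2) L R - magneticTension L R
        + g * (amean (fun U => U.h * U.b) L R - amean SWState.h L R * amean SWState.b L R) := rfl

theorem ecFlux_one_add_source (g : ℝ) (U W : SWState) :
    ecFlux g U W 1 + g * U.h * amean SWState.b U W
      = ecFlux g U W 0 * U.vx + amean SWState.h U W * ajump (bernoulliHead g) U W / 2
        - magneticTension U W + g * U.h * (U.h / 2 + U.b) := by
  have velocity := amean_eq_left_add_half_ajump SWState.vx U W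
  have height := amean_eq_left_add_half_ajump SWState.h U W
  have bottom := amean_eq_left_add_half_ajump SWState.b U W
  have pressure : amean (fun V => V.h ^ 2) U W
      = U.h ^ 2 + amean SWState.h U W * ajump SWState.h U W := by
    rw [amean_eq_left_add_half_ajump, ajump_sq]
    ring
  have topography : amean (fun V => V.h * V.b) U W - amean SWState.h U W * amean SWState.b U W
        + U.h * amean SWState.b U W
      = U.h * U.b + amean SWState.h U W * ajump SWState.b U W / 2 := by
    rw [amean_mul, bottom, height]
    ring
  rw [ecFlux_one, ecFlux_zero, ajump_bernoulliHead]
  linear_combination amean SWState.h U W * amean SWState.vx U W * velocity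
    + g / 2 * pressure + g * topography

theorem momentum_residual_eq (g : ℝ) (Um Ui Up : SWState) :
    ecFlux g Ui Up 1 - ecFlux g Um Ui 1
        + g * Ui.h * (amean SWState.b Ui Up - amean SWState.b Um Ui)
      = (ecFlux g Ui Up 0 - ecFlux g Um Ui 0) * Ui.vx
        + (amean SWState.h Ui Up * ajump (bernoulliHead g) Ui Up
          - amean SWState.h Ui Um * ajump (bernoulliHead g) Ui Um) / 2
        - (magneticTension Ui Up - magneticTension Um Ui) := by
  rw [ecFlux_comm g Um Ui, amean_comm SWState.b Um Ui, magneticTension_comm Um Ui]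
  linear_combination ecFlux_one_add_source g Ui Up - ecFlux_one_add_source g Ui Um

end SWMHD

theorem moving_equilibrium_general (g C₁ C₂ C₃ : ℝ) (Um Ui Up : SWState)
    (hTL : magneticTension Um Ui = C₃) (hTR : magneticTension Ui Up = C₃)
    (hmL : amean SWState.h Um Ui * amean SWState.vx Um Ui = C₁)
    (hmR : amean SWState.h Ui Up * amean SWState.vx Ui Up = C₁)
    (hpm : bernoulliHead g Um = C₂) (hpi : bernoulliHead g Ui = C₂)
    (hpp : bernoulliHead g Up = C₂) :
    ecFlux g Ui Up 0 - ecFlux g Um Ui 0 = 0 ∧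
    ecFlux g Ui Up 1 - ecFlux g Um Ui 1
      + g * Ui.h * (amean SWState.b Ui Up - amean SWState.b Um Ui) = 0 := by
  have mass : ecFlux g Ui Up 0 - ecFlux g Um Ui 0 = 0 := by
    rw [ecFlux_zero, ecFlux_zero, hmL, hmR, sub_self]
  have head_right : ajump (bernoulliHead g) Ui Up = 0 := by rw [ajump, hpp, hpi, sub_self]
  have head_left : ajump (bernoulliHead g) Ui Um = 0 := by rw [ajump, hpm, hpi, sub_self]
  refine ⟨mass, ?_⟩
  rw [momentum_residual_eq, mass, head_right, head_left, hTL, hTR]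
  ring

/-- moving-equilibrium preservation of the second-order EC scheme.
Under zero magnetic field and the 1D moving-equilibrium conditions, the `h`- and
`h·vx`-components of the right-hand side of the semi-discrete EC scheme vanish. -/
theorem moving_equilibrium (g C₁ C₂ : ℝ) (Um Ui Up : SWState)
    (hBm : Um.Bx = 0 ∧ Um.By = 0) (hBi : Ui.Bx = 0 ∧ Ui.By = 0) (hBp : Up.Bx = 0 ∧ Up.By = 0)
    (hmL : amean (fun U => U.h) Um Ui * amean (fun U => U.vx) Um Ui = C₁)
    (hmR : amean (fun U => U.h) Ui Up * amean (fun U => U.vx) Ui Up = C₁)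
    (hpm : Um.vx ^ 2 / 2 + g * (Um.h + Um.b) = C₂)
    (hpi : Ui.vx ^ 2 / 2 + g * (Ui.h + Ui.b) = C₂)
    (hpp : Up.vx ^ 2 / 2 + g * (Up.h + Up.b) = C₂) :
    ecFlux g Ui Up 0 - ecFlux g Um Ui 0 = 0 ∧
    ecFlux g Ui Up 1 - ecFlux g Um Ui 1
      + g * Ui.h * (amean (fun U => U.b) Ui Up - amean (fun U => U.b) Um Ui) = 0 := by
  exact moving_equilibrium_general g C₁ C₂ 0 Um Ui Up (magneticTension_eq_zero hBm.1 hBi.1)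
    (magneticTension_eq_zero hBi.1 hBp.1) hmL hmR hpm hpi hpp
end
end

section
/- Let g > 0 and let L, R be two states with h_L > 0 and h_R > 0, and let α ≥ max(|vx_L| + √(g·h_L + Bx_L²), |vx_R| + √(g·h_R + Bx_R²)). Then C := ¼·([vy]² + [By]²)·([h·vx] − 2α⟨h⟩) − ½·[h·Bx]·[vy]·[By] ≤ 0. -/
open scoped BigOperators
noncomputable section
open Matrix

open SWMHD

/-!
With `x = [vy]`, `y = [By]`, `c = [h Bx]` and `s = 2 α ⟨h⟩ - [h vx]`, the inequality `C ≤ 0` reads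
`-2 c x y ≤ s (x² + y²)`, so by Young's inequality it suffices that `|c| ≤ s`. This holds because
`s = h_L (α + vx_L) + h_R (α - vx_R)` while `|c| ≤ h_L |Bx_L| + h_R |Bx_R|`. The wave-speed
bound on `α` makes each bracket dominate the corresponding `|Bx|`, since `|Bx| ≤ √(g h + Bx²)`.
-/

lemma abs_two_mul_mul_mul_le {𝕜 : Type*} [CommRing 𝕜] [LinearOrder 𝕜] [IsStrictOrderedRing 𝕜]
    {c s : 𝕜} (hc : |c| ≤ s) (x y : 𝕜) : |2 * c * x * y| ≤ s * (x ^ 2 + y ^ 2) := by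
  have young : 2 * |x| * |y| ≤ x ^ 2 + y ^ 2 := by
    simpa only [sq_abs] using two_mul_le_add_sq |x| |y|
  have s_nonneg : 0 ≤ s := (abs_nonneg c).trans hc
  calc |2 * c * x * y| = |c| * (2 * |x| * |y|) := by
        rw [abs_mul, abs_mul, abs_mul, abs_two]; ring
    _ ≤ s * (x ^ 2 + y ^ 2) := by gcongr

lemma abs_le_sqrt_add_sq {c : ℝ} (hc : 0 ≤ c) (x : ℝ) : |x| ≤ √(c + x ^ 2) :=
  Real.abs_le_sqrt (le_add_of_nonneg_left hc)

lemma abs_ajump_mul_le {w u f : SWState → ℝ} {L R : SWState} {α : ℝ}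
    (hL : 0 ≤ w L) (hR : 0 ≤ w R) (hαL : |f L| - u L ≤ α) (hαR : |f R| + u R ≤ α) :
    |ajump (fun U => w U * f U) L R|
      ≤ 2 * α * amean w L R - ajump (fun U => w U * u U) L R :=
  calc |w R * f R - w L * f L| ≤ |w R * f R| + |w L * f L| := abs_sub _ _
    _ = w R * |f R| + w L * |f L| := by
        rw [abs_mul, abs_mul, abs_of_nonneg hL, abs_of_nonneg hR]
    _ ≤ w R * (α - u R) + w L * (α + u L) := by
        gcongr
        · exact le_sub_right_of_add_le hαR
        · exact sub_le_iff_le_add.1 hαL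
    _ = 2 * α * amean w L R - ajump (fun U => w U * u U) L R := by
        simp only [amean, ajump]; ring

theorem termC_nonpos_general {L R : SWState} (hL : 0 ≤ L.h) (hR : 0 ≤ R.h) {α : ℝ}
    (hαL : |L.Bx| - L.vx ≤ α) (hαR : |R.Bx| + R.vx ≤ α) :
    (1 / 4) * ((ajump (fun U => U.vy) L R) ^ 2 + (ajump (fun U => U.By) L R) ^ 2)
        * (ajump (fun U => U.h * U.vx) L R - 2 * α * amean (fun U => U.h) L R)
      - (1 / 2) * ajump (fun U => U.h * U.Bx) L R
        * ajump (fun U => U.vy) L R * ajump (fun U => U.By) L R ≤ 0 := by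
  have jump_le : |ajump (fun U => U.h * U.Bx) L R|
      ≤ 2 * α * amean (fun U => U.h) L R - ajump (fun U => U.h * U.vx) L R :=
    abs_ajump_mul_le hL hR hαL hαR
  have form_le := abs_two_mul_mul_mul_le jump_le (ajump (fun U => U.vy) L R)
    (ajump (fun U => U.By) L R)
  linarith [neg_le_of_abs_le form_le]

/-- the term `C` in the entropy production decomposition of the
Lax–Friedrichs flux is nonpositive. -/
theorem termC_nonpos (g : ℝ) (hg : 0 < g) (L R : SWState)
    (hL : 0 < L.h) (hR : 0 < R.h) (α : ℝ)
    (hα : max (|L.vx| + Real.sqrt (g * L.h + L.Bx ^ 2))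
              (|R.vx| + Real.sqrt (g * R.h + R.Bx ^ 2)) ≤ α) :
    (1 / 4) * ((ajump (fun U => U.vy) L R) ^ 2 + (ajump (fun U => U.By) L R) ^ 2)
        * (ajump (fun U => U.h * U.vx) L R - 2 * α * amean (fun U => U.h) L R)
      - (1 / 2) * ajump (fun U => U.h * U.Bx) L R
        * ajump (fun U => U.vy) L R * ajump (fun U => U.By) L R ≤ 0 := by
  have hBL : |L.Bx| ≤ √(g * L.h + L.Bx ^ 2) := abs_le_sqrt_add_sq (mul_pos hg hL).le _
  have hBR : |R.Bx| ≤ √(g * R.h + R.Bx ^ 2) := abs_le_sqrt_add_sq (mul_pos hg hR).le _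
  obtain ⟨hαL, hαR⟩ := max_le_iff.1 hα
  exact termC_nonpos_general hL.le hR.le
    (by linarith [neg_abs_le L.vx]) (by linarith [le_abs_self R.vx])
end
end
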